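/- Let A be a set with a length function μ and let 𝐰 = a₁(r₁)⋯a_k(r_k) be a word in the alphabet {a(r) : a ∈ A, r ∈ ℝ} representing w ∈ F_ℝ(A). Then ψ_{1/t}(𝐰[t]) converges to w as t → ∞ in the pseudometric of F_ℝ(A); that is, ‖w⁻¹·ψ_{1/t}(𝐰[t])‖_{F_ℝ(A;μ)} → 0 as t → ∞. -/

import Mathlib

/-!
Two words of the same shape, `w = g₁⋯g_k` and `v = h₁⋯h_k`, can be compared letter by letter:
splitting off the first letters as `w = g w'` and `v = h v'` gives
`w⁻¹ v = (w'⁻¹ (g⁻¹ h) w') (w'⁻¹ v')`, so for a conjugation-invariant norm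
`‖w⁻¹ v‖ ≤ ∑ ‖gᵢ⁻¹ hᵢ‖`. Truncating the letter `a(r)` at scale `t` and rescaling by `1/t` gives
`a(s)` with `|s - r| ≤ 1/t`, and `a(r)⁻¹ a(s) = a(s - r)`, so `‖w⁻¹ ψ_{1/t}(𝐰[t])‖` is at most
`(∑ μ(aᵢ)) / t`.
-/

open Filter

/-- The set of total lengths of expressions of `g` as a product of conjugates
of generators `gen i ^ {±1}`, each weighted by the length function `ℓ`. -/
def wordNormSet {G : Type*} [Group G] {I : Type*}
    (gen : I → G) (ℓ : I → ℝ) (g : G) : Set ℝ :=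
  { x | ∃ l : List (G × I × Bool),
      g = (l.map fun p => p.1 * (if p.2.2 then gen p.2.1 else (gen p.2.1)⁻¹) * p.1⁻¹).prod ∧
      x = (l.map fun p => ℓ p.2.1).sum }

/-- The conjugation-invariant word norm associated to a length function. -/
noncomputable def wordNorm {G : Type*} [Group G] {I : Type*}
    (gen : I → G) (ℓ : I → ℝ) (g : G) : ℝ :=
  sInf (wordNormSet gen ℓ g)

/-- `F_ℝ(A)`: the free product of copies of `ℝ` indexed by `A`. -/
abbrev FR (A : Type*) : Type _ := Monoid.CoprodI (fun _ : A => Multiplicative ℝ)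

/-- The generator `a(r)` of `F_ℝ(A)`. -/
def genFR (A : Type*) (p : A × ℝ) : FR A :=
  Monoid.CoprodI.of (i := p.1) (Multiplicative.ofAdd p.2)

/-- The conjugation-invariant word norm `‖·‖_{F_ℝ(A;μ)}`. -/
noncomputable def FRnorm {A : Type*} (μ : A → ℝ) : FR A → ℝ :=
  wordNorm (genFR A) (fun p => |p.2| * μ p.1)

/-- Multiplication by `t` as an endomorphism of the group `Multiplicative ℝ`. -/
def scaleHom (t : ℝ) : Multiplicative ℝ →* Multiplicative ℝ where
  toFun x := Multiplicative.ofAdd (t * Multiplicative.toAdd x)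
  map_one' := by simp
  map_mul' x y := by simp [toAdd_mul, mul_add, ofAdd_add]

/-- The endomorphism `ψ_t` of `F_ℝ(A)` determined by `ψ_t(a(r)) = a(tr)`. -/
noncomputable def psiT {A : Type*} (t : ℝ) : FR A →* FR A :=
  Monoid.CoprodI.lift (fun a =>
    (Monoid.CoprodI.of (M := fun _ : A => Multiplicative ℝ) (i := a)).comp (scaleHom t))

/-- `⟦x⟧`: the floor of `x` for `x ≥ 0`, the ceiling of `x` for `x ≤ 0`. -/
noncomputable def myfloor (x : ℝ) : ℤ := if 0 ≤ x then ⌊x⌋ else ⌈x⌉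

/-- The element of `F_ℝ(A)` represented by the word `𝐰 = a₁(r₁)⋯a_k(r_k)`. -/
def wordProd {A : Type*} (l : List (A × ℝ)) : FR A :=
  (l.map (genFR A)).prod

/-- The truncation `𝐰[t] = a₁^{⟦t r₁⟧} ⋯ a_k^{⟦t r_k⟧} ∈ F(A)`, viewed inside
`F_ℝ(A)` via `a ↦ a(1)` (so `a^{m}` corresponds to `a(m)`). -/
noncomputable def truncProd {A : Type*} (l : List (A × ℝ)) (t : ℝ) : FR A :=
  (l.map fun p => genFR A (p.1, ((myfloor (t * p.2) : ℤ) : ℝ))).prod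

section WordNorm

variable {G I : Type*} [Group G] {gen : I → G} {ℓ : I → ℝ}

theorem zero_mem_wordNormSet_one : 0 ∈ wordNormSet gen ℓ 1 :=
  ⟨[], by simp, by simp⟩

theorem mem_wordNormSet_gen (i : I) : ℓ i ∈ wordNormSet gen ℓ (gen i) :=
  ⟨[(1, i, true)], by simp, by simp⟩

theorem add_mem_wordNormSet_mul {g h : G} {x y : ℝ} (hx : x ∈ wordNormSet gen ℓ g)
    (hy : y ∈ wordNormSet gen ℓ h) : x + y ∈ wordNormSet gen ℓ (g * h) := by
  obtain ⟨L, rfl, rfl⟩ := hx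
  obtain ⟨M, rfl, rfl⟩ := hy
  exact ⟨L ++ M, by simp, by simp⟩

theorem mem_wordNormSet_conj {g : G} {x : ℝ} (hx : x ∈ wordNormSet gen ℓ g) (c : G) :
    x ∈ wordNormSet gen ℓ (c * g * c⁻¹) := by
  obtain ⟨L, rfl, rfl⟩ := hx
  refine ⟨L.map fun p => (c * p.1, p.2), ?_, by simp [Function.comp_def]⟩
  rw [← MulAut.conj_apply, map_list_prod, List.map_map, List.map_map]
  simp only [Function.comp_def, MulAut.conj_apply, mul_inv_rev, mul_assoc]

theorem sum_mem_wordNormSet_inv_prod_mul_prod {α : Type*} {g h : α → G} {x : α → ℝ}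
    (hx : ∀ p, x p ∈ wordNormSet gen ℓ ((g p)⁻¹ * h p)) (l : List α) :
    (l.map x).sum ∈ wordNormSet gen ℓ ((l.map g).prod⁻¹ * (l.map h).prod) := by
  induction l with
  | nil => simpa using zero_mem_wordNormSet_one
  | cons p l ih =>
    have hsplit : ((p :: l).map g).prod⁻¹ * ((p :: l).map h).prod =
        (l.map g).prod⁻¹ * ((g p)⁻¹ * h p) * (l.map g).prod⁻¹⁻¹ *
          ((l.map g).prod⁻¹ * (l.map h).prod) := by
      simp only [List.map_cons, List.prod_cons]
      group
    rw [hsplit, List.map_cons, List.sum_cons]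
    exact add_mem_wordNormSet_mul (mem_wordNormSet_conj (hx p) _) ih

theorem nonneg_of_mem_wordNormSet (hℓ : ∀ i, 0 ≤ ℓ i) {g : G} {x : ℝ}
    (hx : x ∈ wordNormSet gen ℓ g) : 0 ≤ x := by
  obtain ⟨L, -, rfl⟩ := hx
  exact List.sum_nonneg (List.forall_mem_map.2 fun p _ => hℓ p.2.1)

theorem wordNorm_nonneg (hℓ : ∀ i, 0 ≤ ℓ i) (g : G) : 0 ≤ wordNorm gen ℓ g :=
  Real.sInf_nonneg fun _ => nonneg_of_mem_wordNormSet hℓ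

theorem wordNorm_le_of_mem_wordNormSet (hℓ : ∀ i, 0 ≤ ℓ i) {g : G} {x : ℝ}
    (hx : x ∈ wordNormSet gen ℓ g) : wordNorm gen ℓ g ≤ x :=
  csInf_le ⟨0, fun _ => nonneg_of_mem_wordNormSet hℓ⟩ hx

end WordNorm

theorem abs_myfloor_sub_lt_one (x : ℝ) : |(myfloor x : ℝ) - x| < 1 := by
  unfold myfloor
  rw [abs_lt]
  split_ifs
  · constructor <;> linarith [Int.floor_le x, Int.lt_floor_add_one x]
  · constructor <;> linarith [Int.le_ceil x, Int.ceil_lt_add_one x]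

theorem abs_one_div_mul_myfloor_sub_lt {t : ℝ} (ht : 0 < t) (r : ℝ) :
    |1 / t * (myfloor (t * r) : ℝ) - r| < 1 / t := by
  have hfactor : 1 / t * (myfloor (t * r) : ℝ) - r = ((myfloor (t * r) : ℝ) - t * r) / t := by
    field_simp
  rw [hfactor, abs_div, abs_of_pos ht]
  gcongr
  exact abs_myfloor_sub_lt_one _

section FreeProduct

variable {A : Type*}

theorem inv_genFR_mul_genFR (a : A) (r s : ℝ) :
    (genFR A (a, r))⁻¹ * genFR A (a, s) = genFR A (a, s - r) := by
  simp only [genFR]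
  rw [← map_inv, ← map_mul, ← ofAdd_neg, ← ofAdd_add, neg_add_eq_sub]

theorem psiT_genFR (t : ℝ) (p : A × ℝ) : psiT t (genFR A p) = genFR A (p.1, t * p.2) := by
  simp [psiT, genFR, scaleHom]

theorem psiT_truncProd (s t : ℝ) (l : List (A × ℝ)) :
    psiT s (truncProd l t) =
      (l.map fun p => genFR A (p.1, s * (myfloor (t * p.2) : ℝ))).prod := by
  simp only [truncProd, map_list_prod, List.map_map, Function.comp_def, psiT_genFR]

variable {μ : A → ℝ}

theorem abs_mul_length_nonneg (hμ : ∀ a, 0 ≤ μ a) (p : A × ℝ) : 0 ≤ |p.2| * μ p.1 :=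
  mul_nonneg (abs_nonneg p.2) (hμ p.1)

theorem FRnorm_nonneg (hμ : ∀ a, 0 ≤ μ a) (g : FR A) : 0 ≤ FRnorm μ g :=
  wordNorm_nonneg (abs_mul_length_nonneg hμ) g

theorem FRnorm_inv_wordProd_mul_prod_le (hμ : ∀ a, 0 ≤ μ a) (l : List (A × ℝ))
    (s : A × ℝ → ℝ) :
    FRnorm μ ((wordProd l)⁻¹ * (l.map fun p => genFR A (p.1, s p)).prod) ≤
      (l.map fun p => |s p - p.2| * μ p.1).sum := by
  refine wordNorm_le_of_mem_wordNormSet (abs_mul_length_nonneg hμ)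
    (sum_mem_wordNormSet_inv_prod_mul_prod (fun p => ?_) l)
  rw [inv_genFR_mul_genFR p.1 p.2 (s p)]
  exact mem_wordNormSet_gen (p.1, s p - p.2)

theorem FRnorm_inv_wordProd_mul_psiT_truncProd_le (hμ : ∀ a, 0 ≤ μ a) (l : List (A × ℝ))
    {t : ℝ} (ht : 0 < t) :
    FRnorm μ ((wordProd l)⁻¹ * psiT (1 / t) (truncProd l t)) ≤
      1 / t * (l.map fun p => μ p.1).sum := by
  rw [psiT_truncProd, ← List.sum_map_mul_left]
  refine (FRnorm_inv_wordProd_mul_prod_le hμ l _).trans (List.sum_le_sum fun p _ => ?_)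
  exact mul_le_mul_of_nonneg_right (abs_one_div_mul_myfloor_sub_lt ht p.2).le (hμ p.1)

end FreeProduct

/-- for a word `𝐰 = a₁(r₁)⋯a_k(r_k)` representing `w ∈ F_ℝ(A)`,
`ψ_{1/t}(𝐰[t]) → w` as `t → ∞`, i.e. `‖w⁻¹ · ψ_{1/t}(𝐰[t])‖_{F_ℝ(A;μ)} → 0`. -/
theorem psiT_trunc_tendsto
    {A : Type*} (μ : A → ℝ) (hμ : ∀ a, 0 ≤ μ a) (l : List (A × ℝ)) :
    Tendsto (fun t : ℝ => FRnorm μ ((wordProd l)⁻¹ * psiT (1 / t) (truncProd l t)))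
      atTop (nhds 0) := by
  have hbound : Tendsto (fun t : ℝ => 1 / t * (l.map fun p => μ p.1).sum) atTop (nhds 0) := by
    simpa using tendsto_inv_atTop_zero.mul_const (l.map fun p => μ p.1).sum
  refine squeeze_zero' (Eventually.of_forall fun t => FRnorm_nonneg hμ _) ?_ hbound
  filter_upwards [eventually_gt_atTop 0] with t ht
  exact FRnorm_inv_wordProd_mul_psiT_truncProd_le hμ l ht
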